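/- arXiv:2503.09434 — 8 statements merged into one kernel-verified Lean document; each statement's English description precedes it below -/
import Mathlib

section
/- Let E be a real inner product space, ν ∈ ℝ, and let X : E → E satisfy the monotonicity condition ⟨X y − X z, y − z⟩ ≤ −ν‖y − z‖² for all y, z ∈ E. If y, z : [0, T] → E are differentiable curves with y′(t) = X(y(t)) and z′(t) = X(z(t)) for all t ∈ [0, T], then ‖y(t) − z(t)‖ ≤ e^{−ν t}‖y(0) − z(0)‖ for all t ∈ [0, T]. -/
open scoped RealInnerProductSpace

/-- If `X` satisfies the monotonicity condition
`⟪X y − X z, y − z⟫ ≤ −ν‖y − z‖²`, then any two exact solutions of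
`y' = X(y)` on `[0, T]` contract at rate `e^{−ν t}`. -/
theorem flow_contractive_of_monotone
    {E : Type*} [NormedAddCommGroup E] [InnerProductSpace ℝ E]
    (ν : ℝ) (X : E → E)
    (hmono : ∀ y z : E, ⟪X y - X z, y - z⟫ ≤ -ν * ‖y - z‖ ^ 2)
    (T : ℝ) (y z : ℝ → E)
    (hy : ∀ t ∈ Set.Icc (0 : ℝ) T, HasDerivAt y (X (y t)) t)
    (hz : ∀ t ∈ Set.Icc (0 : ℝ) T, HasDerivAt z (X (z t)) t) :
    ∀ t ∈ Set.Icc (0 : ℝ) T, ‖y t - z t‖ ≤ Real.exp (-ν * t) * ‖y 0 - z 0‖ := by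
  have hd : ∀ t ∈ Set.Icc (0 : ℝ) T,
      HasDerivAt (fun s => Real.exp (2 * ν * s) * ‖y s - z s‖ ^ 2)
        (Real.exp (2 * ν * t) * (2 * ν) * ‖y t - z t‖ ^ 2
          + Real.exp (2 * ν * t) * (2 * ⟪y t - z t, X (y t) - X (z t)⟫)) t := by
    intro t ht
    have h1 : HasDerivAt (fun s => Real.exp (2 * ν * s)) (Real.exp (2 * ν * t) * (2 * ν)) t := by
      have h := ((hasDerivAt_id t).const_mul (2 * ν)).exp
      simpa using h
    exact h1.mul ((hy t ht).sub (hz t ht)).norm_sq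
  have hanti := antitoneOn_of_hasDerivWithinAt_nonpos (convex_Icc (0 : ℝ) T)
    (fun t ht => (hd t ht).continuousAt.continuousWithinAt)
    (fun t ht => (hd t (interior_subset ht)).hasDerivWithinAt)
    (fun t _ => by
      have h := hmono (y t) (z t)
      rw [real_inner_comm] at h
      have he := Real.exp_pos (2 * ν * t)
      have := mul_le_mul_of_nonneg_left h he.le
      linarith)
  intro t ht
  have h := hanti ⟨le_rfl, ht.1.trans ht.2⟩ ht ht.1
  simp only [mul_zero, Real.exp_zero, one_mul] at h
  apply le_of_pow_le_pow_left₀ two_ne_zero (by positivity)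
  have e1 : Real.exp (-ν * t) ^ 2 * Real.exp (2 * ν * t) = 1 := by
    rw [sq, ← Real.exp_add, ← Real.exp_add, Real.exp_eq_one_iff]
    ring
  calc ‖y t - z t‖ ^ 2
      = Real.exp (-ν * t) ^ 2 * (Real.exp (2 * ν * t) * ‖y t - z t‖ ^ 2) := by
        rw [← mul_assoc, e1, one_mul]
    _ ≤ Real.exp (-ν * t) ^ 2 * ‖y 0 - z 0‖ ^ 2 := by gcongr
    _ = (Real.exp (-ν * t) * ‖y 0 - z 0‖) ^ 2 := by ring
end

section
/- Let E be a real inner product space, α > 0, and let X : E → E satisfy the α-cocoercivity condition ⟨X y − X z, y − z⟩ ≤ −α‖X y − X z‖² for all y, z ∈ E. If y, z : [0, T] → E are differentiable curves with y′(t) = X(y(t)) and z′(t) = X(z(t)) for all t ∈ [0, T], then the flow is non-expansive: ‖y(t) − z(t)‖ ≤ ‖y(0) − z(0)‖ for all t ∈ [0, T]. -/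
open scoped RealInnerProductSpace

/-- If `X` is `α`-cocoercive with `α > 0`, then the exact flow of `y' = X(y)`
is non-expansive on `[0, T]`. -/
theorem flow_nonexpansive_of_cocoercive
    {E : Type*} [NormedAddCommGroup E] [InnerProductSpace ℝ E]
    (α : ℝ) (hα : 0 < α) (X : E → E)
    (hcoco : ∀ y z : E, ⟪X y - X z, y - z⟫ ≤ -α * ‖X y - X z‖ ^ 2)
    (T : ℝ) (y z : ℝ → E)
    (hy : ∀ t ∈ Set.Icc (0 : ℝ) T, HasDerivAt y (X (y t)) t)
    (hz : ∀ t ∈ Set.Icc (0 : ℝ) T, HasDerivAt z (X (z t)) t) :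
    ∀ t ∈ Set.Icc (0 : ℝ) T, ‖y t - z t‖ ≤ ‖y 0 - z 0‖ := by
  intro t ht
  have hd : ∀ s ∈ Set.Icc (0 : ℝ) T, HasDerivAt (fun s => ‖y s - z s‖ ^ 2)
      (2 * ⟪y s - z s, X (y s) - X (z s)⟫) s := fun s hs =>
    ((hy s hs).sub (hz s hs)).norm_sq
  have hanti : AntitoneOn (fun s => ‖y s - z s‖ ^ 2) (Set.Icc (0 : ℝ) T) := by
    refine antitoneOn_of_deriv_nonpos (convex_Icc 0 T)
      (fun s hs => (hd s hs).continuousAt.continuousWithinAt)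
      (fun s hs => (hd s (interior_subset hs)).differentiableAt.differentiableWithinAt) ?_
    intro s hs
    rw [(hd s (interior_subset hs)).deriv, real_inner_comm]
    have h1 := hcoco (y s) (z s)
    have h2 : 0 ≤ α * ‖X (y s) - X (z s)‖ ^ 2 := by positivity
    linarith
  have h := hanti (Set.left_mem_Icc.mpr (ht.1.trans ht.2)) ht ht.1
  exact (sq_le_sq₀ (norm_nonneg _) (norm_nonneg _)).mp h
end

section
/- The function κ ↦ (1 − cos κ · (sin κ)/κ) − sin κ · √(1 − ((sin κ)/κ)²) is monotone non-decreasing on the interval (0, π]: for all κ₁, κ₂ with 0 < κ₁ ≤ κ₂ ≤ π, one has (1 − cos κ₁ · (sin κ₁)/κ₁) − sin κ₁ · √(1 − ((sin κ₁)/κ₁)²) ≤ (1 − cos κ₂ · (sin κ₂)/κ₂) − sin κ₂ · √(1 − ((sin κ₂)/κ₂)²). -/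
lemma aux_cos_le (x : ℝ) (h0 : 0 < x) (h1 : x ≤ Real.pi) : Real.cos x ≤ Real.sin x / x := by
  rw [le_div_iff₀ h0]
  rcases lt_or_ge x (Real.pi / 2) with h | h
  · have hc : 0 < Real.cos x := Real.cos_pos_of_mem_Ioo ⟨by linarith, h⟩
    have ht := Real.lt_tan h0 h
    rw [Real.tan_eq_sin_div_cos, lt_div_iff₀ hc] at ht
    linarith
  · have hc : Real.cos x ≤ 0 := Real.cos_nonpos_of_pi_div_two_le_of_le h (by linarith)
    have hs := Real.sin_nonneg_of_nonneg_of_le_pi h0.le h1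
    nlinarith

lemma aux_main (x : ℝ) (h0 : 0 < x) (h1 : x ≤ Real.pi) :
    (Real.sin x / x - Real.cos x) ^ 2 ≤ x ^ 2 - Real.sin x ^ 2 := by
  have hsc := aux_cos_le x h0 h1
  have hs0 := Real.sin_nonneg_of_nonneg_of_le_pi h0.le h1
  have hp := Real.sin_sq_add_cos_sq x
  have hS : Real.sin x = (Real.sin x / x) * x := by field_simp
  have hs1 : Real.sin x / x ≤ 1 := by
    rw [div_le_one h0]; exact (Real.sin_lt h0).le
  have hsn : 0 ≤ Real.sin x / x := div_nonneg hs0 h0.le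
  have hS1 := Real.sin_le_one x
  have hc := Real.one_sub_sq_div_two_le_cos (x := x)
  have hc1 := Real.neg_one_le_cos x
  generalize Real.sin x / x = s at *
  rcases le_or_gt (x ^ 2) 2 with h | h
  · have e1 : (s - Real.cos x) ^ 2 ≤ (x ^ 2 / 2) ^ 2 :=
      pow_le_pow_left₀ (by linarith) (by linarith) 2
    have e2 : (1 - x ^ 2 / 2) ^ 2 ≤ Real.cos x ^ 2 :=
      pow_le_pow_left₀ (by linarith) hc 2
    nlinarith
  · have hsx : s * x ≤ 1 := by linarith
    have hx1 : 1 ≤ x := by nlinarith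
    have hss : s ^ 2 * 2 ≤ 1 := by
      have : (s * x) ^ 2 ≤ 1 := by nlinarith [mul_nonneg hsn h0.le]
      nlinarith [sq_nonneg s]
    suffices s ^ 2 - 2 * s * Real.cos x + 1 ≤ x ^ 2 by nlinarith
    rcases le_or_gt x (Real.pi / 2) with h2 | h2
    · have hcn : 0 ≤ Real.cos x := Real.cos_nonneg_of_mem_Icc ⟨by linarith, h2⟩
      nlinarith [mul_nonneg hsn hcn]
    · have hx : 1.57 < x := by linarith [Real.pi_gt_d2]
      have h3 : -2 * s * Real.cos x * x ≤ 1 := by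
        have : -2 * Real.sin x * Real.cos x ≤ 1 := by nlinarith [sq_nonneg (Real.sin x + Real.cos x)]
        rw [hS] at this
        linarith
      have h4 : -2 * s * Real.cos x ≤ 0.64 := by
        by_contra hh
        push Not at hh
        nlinarith
      nlinarith

lemma aux_mono : MonotoneOn (fun x : ℝ => x - Real.arccos (Real.sin x / x)) (Set.Ioc 0 Real.pi) := by
  have hcont : ContinuousOn (fun x : ℝ => x - Real.arccos (Real.sin x / x)) (Set.Ioc 0 Real.pi) := by
    refine continuousOn_id.sub (Real.continuous_arccos.comp_continuousOn ?_)
    exact Real.continuous_sin.continuousOn.div continuousOn_id (fun x hx => hx.1.ne')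
  have hd : ∀ x ∈ interior (Set.Ioc 0 Real.pi),
      HasDerivAt (fun x : ℝ => x - Real.arccos (Real.sin x / x))
        (1 - -(1 / √(1 - (Real.sin x / x) ^ 2)) * ((Real.cos x * x - Real.sin x * 1) / x ^ 2)) x := by
    intro x hx
    rw [interior_Ioc] at hx
    have h0 := hx.1
    have hlt : Real.sin x / x < 1 := by rw [div_lt_one h0]; exact Real.sin_lt h0
    have hnn : 0 ≤ Real.sin x / x :=
      div_nonneg (Real.sin_nonneg_of_nonneg_of_le_pi h0.le hx.2.le) h0.le
    have hq : HasDerivAt (fun y : ℝ => Real.sin y / y)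
        ((Real.cos x * x - Real.sin x * 1) / x ^ 2) x :=
      (Real.hasDerivAt_sin x).div (hasDerivAt_id x) h0.ne'
    have ha : HasDerivAt Real.arccos (-(1 / √(1 - (Real.sin x / x) ^ 2)))
        ((fun y : ℝ => Real.sin y / y) x) :=
      Real.hasDerivAt_arccos (ne_of_gt (lt_of_lt_of_le (by norm_num) hnn)) hlt.ne
    exact (hasDerivAt_id x).sub
      (HasDerivAt.comp (h := fun y : ℝ => Real.sin y / y) x ha hq)
  refine monotoneOn_of_deriv_nonneg (convex_Ioc _ _) hcont
    (fun x hx => (hd x hx).differentiableAt.differentiableWithinAt) ?_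
  intro x hx
  rw [(hd x hx).deriv]
  rw [interior_Ioc] at hx
  have h0 := hx.1
  have hlt : Real.sin x / x < 1 := by rw [div_lt_one h0]; exact Real.sin_lt h0
  have hnn : 0 ≤ Real.sin x / x :=
    div_nonneg (Real.sin_nonneg_of_nonneg_of_le_pi h0.le hx.2.le) h0.le
  have hpos : 0 < √(1 - (Real.sin x / x) ^ 2) := Real.sqrt_pos.2 (by nlinarith)
  have key : (Real.sin x / x - Real.cos x) / x ≤ √(1 - (Real.sin x / x) ^ 2) := by
    apply Real.le_sqrt_of_sq_le
    rw [div_pow, div_le_iff₀ (by positivity)]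
    refine (aux_main x h0 hx.2.le).trans (le_of_eq ?_)
    field_simp
  have e : (Real.cos x * x - Real.sin x * 1) / x ^ 2 = -((Real.sin x / x - Real.cos x) / x) := by
    field_simp
    ring
  rw [e]
  have := (div_le_one hpos).2 key
  have e2 : 1 - -(1 / √(1 - (Real.sin x / x) ^ 2)) * -((Real.sin x / x - Real.cos x) / x)
      = 1 - (Real.sin x / x - Real.cos x) / x / √(1 - (Real.sin x / x) ^ 2) := by ring
  rw [e2]
  linarith

lemma aux_eq (x : ℝ) (h0 : 0 < x) (h1 : x ≤ Real.pi) :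
    (1 - Real.cos x * (Real.sin x / x)) - Real.sin x * Real.sqrt (1 - (Real.sin x / x) ^ 2)
      = 1 - Real.cos (x - Real.arccos (Real.sin x / x)) := by
  have hlt : Real.sin x / x < 1 := by rw [div_lt_one h0]; exact Real.sin_lt h0
  have hnn : 0 ≤ Real.sin x / x :=
    div_nonneg (Real.sin_nonneg_of_nonneg_of_le_pi h0.le h1) h0.le
  rw [Real.cos_sub, Real.cos_arccos (by linarith) hlt.le, Real.sin_arccos]
  ring

/-- The function `κ ↦ (1 − cos κ · (sin κ)/κ) − sin κ · √(1 − ((sin κ)/κ)²)`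
is monotone non-decreasing on `(0, π]`. -/
theorem f2_sub_sqrt_f1f3_monotone_on_Ioc_pi :
    ∀ κ₁ κ₂ : ℝ, 0 < κ₁ → κ₁ ≤ κ₂ → κ₂ ≤ Real.pi →
      (1 - Real.cos κ₁ * (Real.sin κ₁ / κ₁))
          - Real.sin κ₁ * Real.sqrt (1 - (Real.sin κ₁ / κ₁) ^ 2)
        ≤ (1 - Real.cos κ₂ * (Real.sin κ₂ / κ₂))
          - Real.sin κ₂ * Real.sqrt (1 - (Real.sin κ₂ / κ₂) ^ 2) := by
  intro x y hx hxy hy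
  have hy0 := hx.trans_le hxy
  have hx1 := hxy.trans hy
  rw [aux_eq x hx hx1, aux_eq y hy0 hy]
  have hm := aux_mono ⟨hx, hx1⟩ ⟨hy0, hy⟩ hxy
  have hn : Real.arccos (Real.sin x / x) ≤ x := by
    have := Real.antitone_arccos (aux_cos_le x hx hx1)
    rwa [Real.arccos_cos hx.le hx1] at this
  have := Real.cos_le_cos_of_nonneg_of_le_pi (sub_nonneg.2 hn)
    (by linarith [Real.arccos_nonneg (Real.sin y / y)]) hm
  linarith
end

section
/- For every κ with 0 < κ ≤ π, one has 1 − cos κ · (sin κ)/κ ≥ sin κ · √(1 − ((sin κ)/κ)²), i.e. f₂(κ) ≥ √(f₁(κ) f₃(κ)) where f₁(κ) = 1 − cos²κ, f₂(κ) = 1 − cos κ (sin κ)/κ, and f₃(κ) = 1 − ((sin κ)/κ)². -/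
/-- For `0 < κ ≤ π` one has `f₂(κ) ≥ √(f₁(κ) f₃(κ))`, in the form
`1 − cos κ · (sin κ)/κ ≥ sin κ · √(1 − ((sin κ)/κ)²)`
(on `(0, π]`, `√(f₁(κ)) = sin κ`). -/
theorem f2_ge_sqrt_f1f3_on_Ioc_pi :
    ∀ κ : ℝ, 0 < κ → κ ≤ Real.pi →
      1 - Real.cos κ * (Real.sin κ / κ)
        ≥ Real.sin κ * Real.sqrt (1 - (Real.sin κ / κ) ^ 2) := by
  intro κ h0 _
  have hs : |Real.sin κ / κ| ≤ 1 := by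
    rw [abs_div, abs_of_pos h0, div_le_one h0]
    have h := Real.abs_sin_le_abs (x := κ)
    rwa [abs_of_pos h0] at h
  have hs2 : (Real.sin κ / κ) ^ 2 ≤ 1 := (sq_le_one_iff_abs_le_one _).mpr hs
  have hr := Real.sq_sqrt (sub_nonneg.mpr hs2)
  generalize Real.sqrt (1 - (Real.sin κ / κ) ^ 2) = r at *
  generalize Real.sin κ / κ = s at *
  nlinarith [sq_nonneg (Real.sin κ - r), sq_nonneg (Real.cos κ - s), Real.sin_sq_add_cos_sq κ]
end

section
/- As κ → ∞, the function (cosh κ · (sinh κ)/κ − 1) − sinh κ · √(((sinh κ)/κ)² − 1) behaves asymptotically as κ/2 − 1; precisely, the difference ((cosh κ · (sinh κ)/κ − 1) − sinh κ · √(((sinh κ)/κ)² − 1)) − (κ/2 − 1) tends to 0 as κ → ∞. -/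
open Filter

/-- In the negative-curvature case, the function
`f₂(κ) − √(f₁(κ)f₃(κ)) = (cosh κ (sinh κ)/κ − 1) − sinh κ √(((sinh κ)/κ)² − 1)`
behaves asymptotically as `κ/2 − 1`: their difference tends to `0` as
`κ → ∞`. -/
theorem f2_sub_sqrt_f1f3_asymptotic :
    Tendsto (fun κ : ℝ =>
        ((Real.cosh κ * (Real.sinh κ / κ) - 1)
            - Real.sinh κ * Real.sqrt ((Real.sinh κ / κ) ^ 2 - 1))
          - (κ / 2 - 1))
      atTop (nhds 0) := by
  have h9 : Tendsto (fun κ : ℝ => 9 / κ) atTop (nhds 0) :=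
    tendsto_const_nhds.div_atTop tendsto_id
  refine tendsto_of_tendsto_of_tendsto_of_le_of_le' tendsto_const_nhds h9 ?_ ?_
  all_goals
    filter_upwards [eventually_ge_atTop (4 : ℝ)] with κ hκ
    have hpos : 0 < κ := by linarith
    have he : Real.exp (-κ) ≤ 1 := Real.exp_le_one_iff.mpr (by linarith)
    have he0 : 0 < Real.exp (-κ) := Real.exp_pos _
    have hq := Real.quadratic_le_exp_of_nonneg hpos.le
    have hmul : Real.exp κ * Real.exp (-κ) = 1 := by
      rw [← Real.exp_add]; simp
    have hsinh : κ * (κ / 4) ≤ Real.sinh κ := by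
      rw [Real.sinh_eq]; nlinarith
    have hcosh : Real.cosh κ = Real.sinh κ + Real.exp (-κ) := by
      rw [Real.sinh_eq, Real.cosh_eq]; ring
    have hse : Real.sinh κ * Real.exp (-κ) ≤ 1 := by
      rw [Real.sinh_eq]; nlinarith
    obtain ⟨s, hs⟩ : ∃ s, s = Real.sinh κ / κ := ⟨_, rfl⟩
    have hsk : Real.sinh κ = κ * s := by rw [hs]; field_simp
    have hs4 : κ / 4 ≤ s := by
      rw [hs, le_div_iff₀ hpos]; linarith
    have hs1 : 1 ≤ s := by linarith
    rw [← hs, hcosh]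
    rw [hsk] at hse ⊢
    obtain ⟨r, hr⟩ : ∃ r, r = Real.sqrt (s ^ 2 - 1) := ⟨_, rfl⟩
    have hr0 : 0 ≤ r := by rw [hr]; exact Real.sqrt_nonneg _
    have hr2 : r ^ 2 = s ^ 2 - 1 := by
      rw [hr]; exact Real.sq_sqrt (by nlinarith)
    rw [← hr]
    have key : (κ * s + Real.exp (-κ)) * s - 1 - κ * s * r - (κ / 2 - 1)
        = Real.exp (-κ) * s + κ * (s - r) ^ 2 / 2 := by
      linear_combination (-κ / 2) * hr2
    rw [key]
  · positivity
  · have hd0 : 0 ≤ s - r := by nlinarith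
    have hd : (s - r) * κ ≤ 4 := by nlinarith
    have hd2 : ((s - r) * κ) ^ 2 ≤ 4 ^ 2 := by
      have := mul_nonneg hd0 hpos.le
      gcongr
    rw [le_div_iff₀ hpos]
    nlinarith
end

section
/- Let ℍ denote the hyperbolic upper half-plane {z ∈ ℂ : Im z > 0} with its hyperbolic metric. For every h ≥ 0, the map φ_h : ℍ → ℍ defined by φ_h(z) = Re z + i·(e^h · Im z) is non-expansive: d(φ_h(z), φ_h(w)) ≤ d(z, w) for all z, w ∈ ℍ. -/
open UpperHalfPlane

/-- One step of the Geodesic Explicit Euler method with step size `h ≥ 0` for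
the vector field `X = y ∂_y` on the hyperbolic upper half-plane, namely
`z ↦ Re z + i·(e^h · Im z)`, is non-expansive for the hyperbolic distance. -/
theorem gee_step_nonexpansive_upper_half_plane (h : ℝ) (hh : 0 ≤ h) :
    ∀ z w : UpperHalfPlane,
      dist ((⟨⟨z.re, Real.exp h * z.im⟩, by
              simpa using mul_pos (Real.exp_pos h) z.im_pos⟩ : UpperHalfPlane))
           ((⟨⟨w.re, Real.exp h * w.im⟩, by
              simpa using mul_pos (Real.exp_pos h) w.im_pos⟩ : UpperHalfPlane))
        ≤ dist z w := by
  intro z w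
  have hz := z.im_pos
  have hw := w.im_pos
  have h1 : 1 ≤ Real.exp h := Real.one_le_exp hh
  have h0 := Real.exp_pos h
  rw [← abs_of_nonneg (dist_nonneg (x := z) (y := w)), ← abs_of_nonneg (dist_nonneg (α := ℍ)),
    ← Real.cosh_le_cosh, UpperHalfPlane.cosh_dist', UpperHalfPlane.cosh_dist']
  change ((z.re - w.re) ^ 2 + (Real.exp h * z.im) ^ 2 + (Real.exp h * w.im) ^ 2) /
    (2 * (Real.exp h * z.im) * (Real.exp h * w.im)) ≤ _
  generalize Real.exp h = c at *
  have hc : 1 ≤ c ^ 2 := by nlinarith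
  rw [div_le_div_iff₀ (by positivity) (by positivity)]
  have key : 0 ≤ (z.re - w.re) ^ 2 * (c ^ 2 - 1) * (2 * z.im * w.im) :=
    mul_nonneg (mul_nonneg (sq_nonneg _) (by linarith)) (by positivity)
  nlinarith [key]
end

section
/- Let E be a finite-dimensional real inner product space and let A : E → E be a linear map whose range coincides with the range of its adjoint: range(A) = range(A*). Then there exists α ∈ ℝ such that ⟨A v, v⟩ ≤ −α‖A v‖² for all v ∈ E. -/
open scoped RealInnerProductSpace

/-- If a linear operator `A` on a finite-dimensional real inner product space
has `range(A) = range(A*)`, then a cocoercivity constant `α` exists, i.e.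
`⟪A v, v⟫ ≤ −α‖A v‖²` for all `v`. -/
theorem exists_cocoercivity_constant_of_range_eq_range_adjoint
    {E : Type*} [NormedAddCommGroup E] [InnerProductSpace ℝ E]
    [FiniteDimensional ℝ E] (A : E →ₗ[ℝ] E)
    (hrange : LinearMap.range A = LinearMap.range (LinearMap.adjoint A)) :
    ∃ α : ℝ, ∀ v : E, ⟪A v, v⟫ ≤ -α * ‖A v‖ ^ 2 := by
  obtain ⟨g, hg⟩ := A.rangeRestrict.exists_rightInverse_of_surjective A.range_rangeRestrict
  refine ⟨-‖LinearMap.toContinuousLinearMap g‖, fun v => ?_⟩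
  set w := A.rangeRestrict v with hw
  have h1 : A (g w) = A v := by
    have h := congrArg Subtype.val (LinearMap.congr_fun hg w)
    simpa [hw] using h
  have h2 : ⟪A v, v - g w⟫ = 0 := by
    have hm : A v ∈ LinearMap.range (LinearMap.adjoint A) := hrange ▸ ⟨v, rfl⟩
    obtain ⟨u, hu⟩ := hm
    rw [← hu, LinearMap.adjoint_inner_left, map_sub, h1, sub_self, inner_zero_right]
  have h3 : ⟪A v, v⟫ = ⟪A v, g w⟫ := by
    rw [inner_sub_right] at h2
    linarith
  have h4 : ‖g w‖ ≤ ‖LinearMap.toContinuousLinearMap g‖ * ‖A v‖ :=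
    (LinearMap.toContinuousLinearMap g).le_opNorm w
  have h5 := real_inner_le_norm (A v) (g w)
  have h6 := mul_le_mul_of_nonneg_left h4 (norm_nonneg (A v))
  rw [h3, neg_neg]
  nlinarith
end

section
/- Let ε, φ ∈ ℝ with cos φ ≠ 0 and sin φ ≠ 0. Consider the 2×2 real matrices g = [[1, 0], [0, cos²φ]] and A = [[−ε sin φ, cos φ sin φ], [−tan φ, −ε sin φ]]. Then for every v ∈ ℝ², vᵀ g (A v) = −(ε / ((1 + ε²) sin φ)) · ((A v)ᵀ g (A v)). -/
open Matrix

/-- On `S²` with metric matrix `g = diag(1, cos²φ)`, the connection matrix `A`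
of the vector field `X = ε cos φ ∂_φ + ∂_θ` satisfies the cocoercivity
identity `vᵀ g (A v) = −(ε / ((1 + ε²) sin φ)) · ((A v)ᵀ g (A v))`. -/
theorem sphere_example_cocoercivity (ε φ : ℝ) (hcos : Real.cos φ ≠ 0)
    (hsin : Real.sin φ ≠ 0) :
    ∀ v : Fin 2 → ℝ,
      v ⬝ᵥ ((!![1, 0; 0, Real.cos φ ^ 2] : Matrix (Fin 2) (Fin 2) ℝ).mulVec
          ((!![-ε * Real.sin φ, Real.cos φ * Real.sin φ;
               -Real.tan φ, -ε * Real.sin φ] : Matrix (Fin 2) (Fin 2) ℝ).mulVec v))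
        = -(ε / ((1 + ε ^ 2) * Real.sin φ)) *
            (((!![-ε * Real.sin φ, Real.cos φ * Real.sin φ;
                 -Real.tan φ, -ε * Real.sin φ] : Matrix (Fin 2) (Fin 2) ℝ).mulVec v) ⬝ᵥ
              ((!![1, 0; 0, Real.cos φ ^ 2] : Matrix (Fin 2) (Fin 2) ℝ).mulVec
                ((!![-ε * Real.sin φ, Real.cos φ * Real.sin φ;
                     -Real.tan φ, -ε * Real.sin φ] : Matrix (Fin 2) (Fin 2) ℝ).mulVec v))) := by
  intro v
  have hε : (1 + ε ^ 2) ≠ 0 := by positivity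
  simp only [Matrix.mulVec, dotProduct, Fin.sum_univ_two, Matrix.of_apply, Matrix.cons_val_zero,
    Matrix.cons_val_one, Matrix.cons_val', Matrix.cons_val_fin_one, Real.tan_eq_sin_div_cos]
  field_simp
  ring
end
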